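/- Up to isomorphism, SL(2, ℤ/5ℤ) has exactly four nontrivial irreducible finite-dimensional complex representations ρ for which ρ(t) has at most three distinct eigenvalues: two of dimension 2, with eigenvalue sets of ρ(t) equal to {ζ₅, ζ₅⁴} and {ζ₅², ζ₅³}, and two of dimension 3, with eigenvalue sets of ρ(t) equal to {1, ζ₅, ζ₅⁴} and {1, ζ₅², ζ₅³}. -/

import Mathlib

/-- The group `SL(2, ℤ/nℤ)`. -/
abbrev SL2 (n : ℕ) := Matrix.SpecialLinearGroup (Fin 2) (ZMod n)

/-- The element `t = [[1,1],[0,1]]` of `SL(2, ℤ/nℤ)`. -/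
def tGen (n : ℕ) : SL2 n := ⟨!![1, 1; 0, 1], by simp [Matrix.det_fin_two_of]⟩

/-- A representation is irreducible if the space is nonzero and the only invariant
subspaces are `⊥` and `⊤`. -/
def IsIrreducibleRep {G V : Type} [Group G] [AddCommGroup V] [Module ℂ V]
    (ρ : Representation ℂ G V) : Prop :=
  Nontrivial V ∧ ∀ p : Submodule ℂ V, (∀ g : G, p.map (ρ g) ≤ p) → p = ⊥ ∨ p = ⊤

/-- The primitive `m`-th root of unity `ζ_m = exp(2πi/m)`. -/
noncomputable def ζ (m : ℕ) : ℂ := Complex.exp (2 * Real.pi * Complex.I / m)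

/-- A representation is nontrivial if some group element acts nontrivially. -/
def IsNontrivialRep {G V : Type} [Group G] [AddCommGroup V] [Module ℂ V]
    (ρ : Representation ℂ G V) : Prop :=
  ∃ g : G, ρ g ≠ LinearMap.id

/-- Two representations are isomorphic if there is an equivariant linear equivalence. -/
def RepIso {G V W : Type} [Group G] [AddCommGroup V] [Module ℂ V]
    [AddCommGroup W] [Module ℂ W]
    (ρ : Representation ℂ G V) (ρ' : Representation ℂ G W) : Prop :=
  ∃ e : V ≃ₗ[ℂ] W, ∀ (g : G) (v : V), e (ρ g v) = ρ' g (e v)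

/-!
Since `t` is conjugate to `t⁻¹` and is not killed by a nontrivial representation, at most three
eigenvalues means that the spectrum of `ρ(t)` lies in `{1, z, z⁻¹}` for a primitive fifth root of
unity `z`, which is `ζ` or `ζ ^ 2` up to inversion.

*Uniqueness.* Let `s` be the Weyl element and `ε = ±1` the scalar `ρ(-1)`. Choose a
`z`-eigenvector `v` with `ρ(s) v = α v + a + b`, where `ρ(t)` fixes `a` and acts by `z⁻¹` on `b`.
Applying `s ^ 2 = -1`, `s t s = -t⁻¹ s t⁻¹` and `s t⁻¹ s = t s t` to `v` determines `α`, `ρ(s) a`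
and `ρ(s) b` in terms of `z` and `ε`, and shows that `a = 0` exactly when `ε = -1`. As `s` and `t`
generate the group, `v, a, b` span the whole space and `ρ` is determined by `z` and `ε`.

*Existence.* In the Weil representation on functions on `ℤ/5ℤ` attached to `x ↦ z ^ x`, the
element `t` acts by the multiplication operator `z ^ (x ^ 2)`, whose values are `1`, `z` and
`z⁻¹`, no nonzero vector is fixed, and `-1` acts by `f(x) ↦ f(-x)`. Hence the even and the odd
functions contain irreducible subrepresentations of the required kind for `ε = 1` and `ε = -1`.
-/

open Matrix
open scoped MatrixGroups

namespace SL2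

/-- The Weyl element `s = [[0,1],[-1,0]]` of `SL(2, R)`. -/
def weyl (R : Type*) [CommRing R] : SL(2, R) :=
  ⟨!![0, 1; -1, 0], by simp [det_fin_two_of]⟩

/-- The upper unipotent element `u(b) = [[1,b],[0,1]]` of `SL(2, R)`; thus `u(1) = t`. -/
def upper {R : Type*} [CommRing R] (b : R) : SL(2, R) :=
  ⟨!![1, b; 0, 1], by simp [det_fin_two_of]⟩

section CommRing

variable {R : Type*} [CommRing R]

theorem upper_zero : upper (0 : R) = 1 := by
  ext i j
  fin_cases i <;> fin_cases j <;> simp [upper]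

theorem coe_mul_weyl (g : SL(2, R)) :
    (↑(g * weyl R) : Matrix (Fin 2) (Fin 2) R) = !![-g 0 1, g 0 0; -g 1 1, g 1 0] := by
  rw [Matrix.SpecialLinearGroup.coe_mul, eta_fin_two g.1]
  simp [weyl]

theorem coe_mul_upper (g : SL(2, R)) (b : R) :
    (↑(g * upper b) : Matrix (Fin 2) (Fin 2) R) =
      !![g 0 0, g 0 0 * b + g 0 1; g 1 0, g 1 0 * b + g 1 1] := by
  rw [Matrix.SpecialLinearGroup.coe_mul, eta_fin_two g.1]
  simp [upper]

theorem weyl_mul_weyl : weyl R * weyl R = -1 := by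
  apply Subtype.ext
  rw [coe_mul_weyl]
  ext i j
  fin_cases i <;> fin_cases j <;> simp [weyl]

theorem neg_one_mem_center : (-1 : SL(2, R)) ∈ Subgroup.center SL(2, R) := by
  simp [Subgroup.mem_center_iff]

end CommRing

section Field

variable {F : Type*} [Field F]

theorem eq_upper_mul_weyl_mul_upper (g : SL(2, F)) (hc : g 1 0 ≠ 0) :
    g = upper ((g 0 0 - 1) / g 1 0) * weyl F * upper (-g 1 0) * weyl F ^ 3 *
      upper ((g 1 1 - 1) / g 1 0) := by
  have hdet : g 0 0 * g 1 1 - g 0 1 * g 1 0 = 1 := by rw [← det_fin_two, g.det_coe]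
  apply Subtype.ext
  simp only [pow_succ, pow_zero, one_mul, ← mul_assoc, coe_mul_upper, coe_mul_weyl]
  ext i j
  fin_cases i <;> fin_cases j <;> simp [upper] <;> grind

theorem closure_weyl_upper :
    Submonoid.closure (insert (weyl F) (Set.range upper)) = ⊤ := by
  rw [eq_top_iff]
  intro g _
  set M := Submonoid.closure (insert (weyl F) (Set.range upper))
  have hs : weyl F ∈ M := Submonoid.subset_closure (Set.mem_insert _ _)
  have hu (b : F) : upper b ∈ M :=
    Submonoid.subset_closure (Set.mem_insert_of_mem _ (Set.mem_range_self b))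
  have big_cell (h : SL(2, F)) (hc : h 1 0 ≠ 0) : h ∈ M := by
    rw [eq_upper_mul_weyl_mul_upper h hc]
    exact M.mul_mem (M.mul_mem (M.mul_mem (M.mul_mem (hu _) hs) (hu _)) (M.pow_mem hs 3)) (hu _)
  by_cases hc : g 1 0 = 0
  · have hd : (g * weyl F) 1 0 ≠ 0 := by
      intro hd
      simp only [coe_mul_weyl, of_apply, cons_val', cons_val_zero, cons_val_one, neg_eq_zero] at hd
      have hdet := g.det_coe
      rw [det_fin_two, hc, hd, mul_zero, mul_zero, sub_zero] at hdet
      exact zero_ne_one hdet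
    have hgs : g = g * weyl F * weyl F ^ 3 := by
      simp only [pow_succ, pow_zero, one_mul, mul_assoc, weyl_mul_weyl]
      simp [weyl_mul_weyl]
    rw [hgs]
    exact M.mul_mem (big_cell _ hd) (M.pow_mem hs 3)
  · exact big_cell g hc

end Field

theorem tGen_eq_upper (n : ℕ) : tGen n = upper 1 := rfl

theorem tGen_pow (n k : ℕ) : tGen n ^ k = upper (k : ZMod n) := by
  induction k with
  | zero => ext i j; fin_cases i <;> fin_cases j <;> simp [upper]
  | succ k ih =>
    apply Subtype.ext
    rw [pow_succ, ih, tGen_eq_upper, coe_mul_upper]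
    simp [upper, add_comm]

theorem tGen_pow_self (n : ℕ) : tGen n ^ n = 1 := by
  rw [tGen_pow]
  ext i j
  fin_cases i <;> fin_cases j <;> simp [upper]

theorem tGen_inv (n : ℕ) : (tGen n)⁻¹ = upper (-1) := by
  apply Subtype.ext
  rw [Matrix.SpecialLinearGroup.coe_inv]
  simp [tGen, upper, adjugate_fin_two_of]

theorem weyl_mul_tGen_mul_weyl (n : ℕ) :
    weyl (ZMod n) * tGen n * weyl (ZMod n) = -((tGen n)⁻¹ * weyl (ZMod n) * (tGen n)⁻¹) := by
  apply Subtype.ext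
  rw [tGen_inv, tGen_eq_upper, Matrix.SpecialLinearGroup.coe_neg,
    coe_mul_weyl, coe_mul_upper, coe_mul_upper, coe_mul_weyl]
  simp [weyl, upper]

theorem weyl_mul_tGen_inv_mul_weyl (n : ℕ) :
    weyl (ZMod n) * (tGen n)⁻¹ * weyl (ZMod n) = tGen n * weyl (ZMod n) * tGen n := by
  apply Subtype.ext
  rw [tGen_inv, tGen_eq_upper, coe_mul_weyl, coe_mul_upper, coe_mul_upper,
    coe_mul_weyl]
  simp [weyl, upper]

theorem isConj_tGen_five_inv : IsConj (tGen 5) (tGen 5)⁻¹ :=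
  isConj_iff.2 ⟨⟨!![2, 0; 0, 3], by decide⟩, by decide⟩

theorem closure_weyl_tGen (p : ℕ) [Fact p.Prime] :
    Submonoid.closure {weyl (ZMod p), tGen p} = ⊤ := by
  rw [eq_top_iff, ← closure_weyl_upper, Submonoid.closure_le, Set.insert_subset_iff]
  refine ⟨Submonoid.subset_closure (Set.mem_insert _ _), ?_⟩
  rintro _ ⟨b, rfl⟩
  rw [← ZMod.natCast_zmod_val b, ← tGen_pow]
  exact Submonoid.pow_mem _ (Submonoid.subset_closure (by simp)) _

theorem eq_one_of_map_tGen_eq_one {p : ℕ} [Fact p.Prime] {M : Type*} [Monoid M]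
    {f : SL2 p →* M} (hf : f (tGen p) = 1) : f = 1 := by
  have hinv : f (tGen p)⁻¹ = 1 := by
    rw [← mul_one (f _), ← hf, ← map_mul, inv_mul_cancel, map_one, hf]
  have hs : f (weyl (ZMod p)) * f (weyl (ZMod p)) = f (weyl (ZMod p)) := by
    simpa [hf, hinv] using congrArg f (weyl_mul_tGen_inv_mul_weyl p)
  have hs' : f (weyl (ZMod p)) = 1 := ((Group.isUnit (weyl (ZMod p))).map f).mul_eq_left.1 hs
  refine MonoidHom.eq_of_eqOn_denseM (closure_weyl_tGen p) ?_
  rintro _ (rfl | rfl)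
  exacts [hs', hf]

end SL2

section LinearAlgebra

variable {K V : Type*} [Field K] [AddCommGroup V] [Module K V]

theorem iSup_eigenspace_eq_top_of_pow_eq_one [IsAlgClosed K] [FiniteDimensional K V]
    {f : Module.End K V} {n : ℕ} (hn : (n : K) ≠ 0) (hf : f ^ n = 1) :
    ⨆ μ, f.eigenspace μ = ⊤ :=
  (Module.End.isSemisimple_of_squarefree_aeval_eq_zero
    (Polynomial.X_pow_sub_one_separable_iff.2 hn).squarefree
    (by simp [hf])).iSup_eigenspace_eq_top

theorem isCompl_eigenspace_of_spectrum_subset [FiniteDimensional K V] {f : Module.End K V}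
    (hf : ⨆ μ, f.eigenspace μ = ⊤) {μ : K} {s : Set K} (hμ : μ ∉ s)
    (hs : spectrum K f ⊆ insert μ s) : IsCompl (f.eigenspace μ) (⨆ ν ∈ s, f.eigenspace ν) := by
  refine ⟨f.eigenspaces_iSupIndep.disjoint_biSup hμ, codisjoint_iff.2 (top_le_iff.1 ?_)⟩
  rw [← hf, ← iSup_insert (f := fun ν ↦ f.eigenspace ν)]
  refine iSup_le fun ν ↦ ?_
  by_cases hν : f.HasEigenvalue ν
  · exact le_iSup₂_of_le ν (hs hν.mem_spectrum) le_rfl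
  · rw [Module.End.hasEigenvalue_iff, not_not] at hν
    exact hν ▸ bot_le

theorem eq_zero_of_eigenvectors_add_eq_zero {f : Module.End K V} {μ₁ μ₂ μ₃ : K} {x y w : V}
    (h12 : μ₁ ≠ μ₂) (h13 : μ₁ ≠ μ₃) (h23 : μ₂ ≠ μ₃) (hx : f x = μ₁ • x) (hy : f y = μ₂ • y)
    (hw : f w = μ₃ • w) (h : x + y + w = 0) : x = 0 ∧ y = 0 ∧ w = 0 := by
  have hinj : Function.Injective ![μ₁, μ₂, μ₃] := by
    intro i j
    fin_cases i <;> fin_cases j <;> simp [h12, h13, h23, h12.symm, h13.symm, h23.symm]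
  have hzero := (iSupIndep_iff_finsetSum_eq_zero_imp_eq_zero _).1
    (f.eigenspaces_iSupIndep.comp hinj) Finset.univ ![x, y, w]
    (by simp [Fin.forall_fin_succ, hx, hy, hw])
    (by simpa [Fin.sum_univ_three] using h)
  simpa [Fin.forall_fin_succ] using hzero

theorem exists_apply_sub_smul_mem [IsAlgClosed K] [FiniteDimensional K V] {p q : Submodule K V}
    (hpq : IsCompl p q) (hp : p ≠ ⊥) (f : Module.End K V) :
    ∃ v ∈ p, v ≠ 0 ∧ ∃ α : K, f v - α • v ∈ q := by
  have := Submodule.nontrivial_iff_ne_bot.2 hp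
  obtain ⟨α, hα⟩ := Module.End.exists_eigenvalue
    ((p.projectionOnto q hpq ∘ₗ f ∘ₗ p.subtype : Module.End K p))
  obtain ⟨v, hv⟩ := hα.exists_hasEigenvector
  refine ⟨v, v.2, by simpa using hv.2, α, ?_⟩
  rw [← Submodule.projectionOnto_apply_eq_zero_iff hpq, map_sub, sub_eq_zero]
  simpa using hv.apply_eq_smul

end LinearAlgebra

section Representation

variable {G V W U : Type} [Group G] [AddCommGroup V] [Module ℂ V] [AddCommGroup W] [Module ℂ W]
  [AddCommGroup U] [Module ℂ U] {ρ : Representation ℂ G V} {σ : Representation ℂ G W}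
  {τ : Representation ℂ G U}

namespace RepIso

theorem symm (h : RepIso ρ σ) : RepIso σ ρ := by
  obtain ⟨e, he⟩ := h
  exact ⟨e.symm, fun g v ↦ by rw [e.symm_apply_eq, he, e.apply_symm_apply]⟩

theorem trans (h : RepIso ρ σ) (h' : RepIso σ τ) : RepIso ρ τ := by
  obtain ⟨e, he⟩ := h
  obtain ⟨e', he'⟩ := h'
  exact ⟨e.trans e', fun g v ↦ by simp [he, he']⟩

theorem finrank_eq (h : RepIso ρ σ) : Module.finrank ℂ V = Module.finrank ℂ W :=
  h.choose.finrank_eq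

theorem spectrum_eq (h : RepIso ρ σ) (g : G) : spectrum ℂ (ρ g) = spectrum ℂ (σ g) := by
  obtain ⟨e, he⟩ := h
  rw [← AlgEquiv.spectrum_eq (e.conjAlgEquiv ℂ) (ρ g)]
  congr 1
  ext v
  simp [LinearEquiv.conjAlgEquiv_apply, he]

theorem isIrreducibleRep (h : RepIso ρ σ) (hρ : IsIrreducibleRep ρ) : IsIrreducibleRep σ := by
  obtain ⟨e, he⟩ := h
  have := hρ.1
  refine ⟨e.symm.nontrivial, fun p hp ↦ ?_⟩
  have hcomap (g : G) : (p.comap e.toLinearMap).map (ρ g) ≤ p.comap e.toLinearMap := by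
    rintro _ ⟨v, hv, rfl⟩
    simpa [he] using hp g (Submodule.mem_map_of_mem hv)
  have hp' := Submodule.map_comap_eq_of_surjective (f := e.toLinearMap) e.surjective p
  rcases hρ.2 _ hcomap with h | h <;> rw [h] at hp' <;> simp_all

theorem isNontrivialRep (h : RepIso ρ σ) (hρ : IsNontrivialRep ρ) : IsNontrivialRep σ := by
  obtain ⟨e, he⟩ := h
  obtain ⟨g, hg⟩ := hρ
  refine ⟨g, fun h ↦ hg (LinearMap.ext fun v ↦ e.injective ?_)⟩
  simp [he, h]

theorem of_toMatrix_eq {ι : Type*} [Fintype ι] [DecidableEq ι] {s : Set G}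
    (hs : Submonoid.closure s = ⊤) (b : Module.Basis ι ℂ V) (c : Module.Basis ι ℂ W)
    (h : ∀ g ∈ s, LinearMap.toMatrix b b (ρ g) = LinearMap.toMatrix c c (σ g)) : RepIso ρ σ := by
  let B : G →* Matrix ι ι ℂ := (LinearMap.toMatrixAlgEquiv b : _ →* _).comp ρ
  let C : G →* Matrix ι ι ℂ := (LinearMap.toMatrixAlgEquiv c : _ →* _).comp σ
  have hBC : B = C := MonoidHom.eq_of_eqOn_denseM hs h
  refine ⟨b.equiv c (Equiv.refl ι), fun g v ↦ ?_⟩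
  have hg : LinearMap.toMatrix b b (ρ g) = LinearMap.toMatrix c c (σ g) :=
    DFunLike.congr_fun hBC g
  suffices (b.equiv c (Equiv.refl ι)).toLinearMap ∘ₗ ρ g =
      σ g ∘ₗ (b.equiv c (Equiv.refl ι)).toLinearMap from LinearMap.congr_fun this v
  apply (LinearMap.toMatrix b c).injective
  rw [LinearMap.toMatrix_comp b b c, LinearMap.toMatrix_comp b c c, hg]
  have : LinearMap.toMatrix b c (b.equiv c (Equiv.refl ι)).toLinearMap = 1 := by
    ext i j
    simp [LinearMap.toMatrix_apply, Matrix.one_apply, Finsupp.single_apply, eq_comm]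
  rw [this, mul_one, one_mul]

end RepIso

/-- The representation on `W` obtained from `ρ` by transport of structure along `e`. -/
def transport (ρ : Representation ℂ G V) (e : V ≃ₗ[ℂ] W) : Representation ℂ G W :=
  (e.conjAlgEquiv ℂ : Module.End ℂ V →* Module.End ℂ W).comp ρ

theorem repIso_transport (ρ : Representation ℂ G V) (e : V ≃ₗ[ℂ] W) : RepIso ρ (transport ρ e) :=
  ⟨e, fun g v ↦ by simp [transport, LinearEquiv.conjAlgEquiv_apply]⟩

theorem map_le_of_closure_eq_top {s : Set G} (hs : Submonoid.closure s = ⊤) {p : Submodule ℂ V}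
    (hp : ∀ g ∈ s, p.map (ρ g) ≤ p) (g : G) : p.map (ρ g) ≤ p := by
  induction hs.symm ▸ Submonoid.mem_top g using Submonoid.closure_induction with
  | mem g hg => exact hp g hg
  | one => rw [map_one, Module.End.one_eq_id, Submodule.map_id]
  | mul g h _ _ ihg ihh =>
    rw [map_mul, Module.End.mul_eq_comp, Submodule.map_comp]
    exact (Submodule.map_mono ihh).trans ihg

theorem IsIrreducibleRep.eq_bot_or_eq_top (hρ : IsIrreducibleRep ρ) (p : Subrepresentation ρ) :
    p.toSubmodule = ⊥ ∨ p.toSubmodule = ⊤ :=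
  hρ.2 _ fun g ↦ Submodule.map_le_iff_le_comap.2 fun _ hv ↦ p.apply_mem_toSubmodule g hv

theorem spectrum_toRepresentation_subset [FiniteDimensional ℂ V] (q : Subrepresentation ρ) (g : G) :
    spectrum ℂ (q.toRepresentation g) ⊆ spectrum ℂ (ρ g) := by
  intro μ hμ
  obtain ⟨v, hv⟩ := (Module.End.hasEigenvalue_iff_mem_spectrum.2 hμ).exists_hasEigenvector
  refine (Module.End.hasEigenvalue_of_hasEigenvector (x := (v : V))
    ⟨Module.End.mem_eigenspace_iff.2 (congrArg Subtype.val hv.apply_eq_smul), ?_⟩).mem_spectrum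
  simpa using hv.2

theorem exists_le_isIrreducibleRep [FiniteDimensional ℂ V] {p : Subrepresentation ρ} (hp : p ≠ ⊥) :
    ∃ q ≤ p, IsIrreducibleRep q.toRepresentation := by
  have hwf : WellFounded ((· < ·) : Subrepresentation ρ → Subrepresentation ρ → Prop) :=
    InvImage.wf Subrepresentation.toSubmodule (wellFounded_lt (α := Submodule ℂ V))
  have := isAtomic_of_orderBot_wellFounded_lt hwf
  obtain ⟨q, hq, hqp⟩ := (eq_bot_or_exists_atom_le p).resolve_left hp
  refine ⟨q, hqp, ?_, fun r hr ↦ ?_⟩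
  · rw [Submodule.nontrivial_iff_ne_bot]
    exact fun h ↦ hq.1 (Subrepresentation.toSubmodule_injective h)
  let r' : Subrepresentation ρ :=
    { toSubmodule := r.map q.toSubmodule.subtype
      apply_mem_toSubmodule := by
        rintro g _ ⟨v, hv, rfl⟩
        exact ⟨_, hr g (Submodule.mem_map_of_mem hv), rfl⟩ }
  have hinj := Submodule.map_injective_of_injective q.toSubmodule.injective_subtype
  rcases hq.le_iff.1 (show r' ≤ q from Submodule.map_subtype_le _ _) with h | h
  · exact .inl (hinj ((congrArg Subrepresentation.toSubmodule h).trans (Submodule.map_bot _).symm))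
  · exact .inr (hinj ((congrArg Subrepresentation.toSubmodule h).trans
      (Submodule.map_subtype_top _).symm))

theorem IsIrreducibleRep.exists_basis_coe_eq (hρ : IsIrreducibleRep ρ) {s : Set G}
    (hs : Submonoid.closure s = ⊤) {ι : Type*} [Nonempty ι] {e : ι → V}
    (he : LinearIndependent ℂ e)
    (hspan : ∀ g ∈ s, ∀ i, ρ g (e i) ∈ Submodule.span ℂ (Set.range e)) :
    ∃ b : Module.Basis ι ℂ V, ⇑b = e := by
  have hinv := map_le_of_closure_eq_top hs (ρ := ρ) (p := Submodule.span ℂ (Set.range e))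
    fun g hg ↦ by
      rw [Submodule.map_span_le]
      rintro _ ⟨i, rfl⟩
      exact hspan g hg i
  have htop : Submodule.span ℂ (Set.range e) = ⊤ := by
    refine (hρ.2 _ hinv).resolve_left fun hbot ↦ ?_
    have i := Classical.arbitrary ι
    exact he.ne_zero i ((Submodule.span_eq_bot.1 hbot) _ (Set.mem_range_self i))
  exact ⟨.mk he htop.ge, Module.Basis.coe_mk he htop.ge⟩

theorem IsIrreducibleRep.exists_basis_toMatrix_eq (hρ : IsIrreducibleRep ρ) {g h : G}
    (hgh : Submonoid.closure {g, h} = ⊤) {ι : Type*} [Fintype ι] [DecidableEq ι] [Nonempty ι]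
    {e : ι → V} (he : LinearIndependent ℂ e) {A B : Matrix ι ι ℂ}
    (hA : ∀ j, ρ g (e j) = ∑ i, A i j • e i) (hB : ∀ j, ρ h (e j) = ∑ i, B i j • e i) :
    ∃ b : Module.Basis ι ℂ V,
      LinearMap.toMatrix b b (ρ g) = A ∧ LinearMap.toMatrix b b (ρ h) = B := by
  have hmem (c : ι → ℂ) : ∑ i, c i • e i ∈ Submodule.span ℂ (Set.range e) :=
    Submodule.sum_smul_mem _ _ fun i _ ↦ Submodule.subset_span (Set.mem_range_self i)
  obtain ⟨b, rfl⟩ := hρ.exists_basis_coe_eq hgh he (by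
    rintro _ (rfl | rfl) j
    exacts [hA j ▸ hmem _, hB j ▸ hmem _])
  have key {k : G} {C : Matrix ι ι ℂ} (hC : ∀ j, ρ k (b j) = ∑ i, C i j • b i) :
      LinearMap.toMatrix b b (ρ k) = C := by
    ext i j
    simp [LinearMap.toMatrix_apply, hC, Finsupp.single_apply]
  exact ⟨b, key hA, key hB⟩

/-- The `μ`-eigenspace of a central element `z`, as a subrepresentation. -/
def centralEigenspace (ρ : Representation ℂ G V) {z : G} (hz : z ∈ Subgroup.center G) (μ : ℂ) :
    Subrepresentation ρ where
  toSubmodule := Module.End.eigenspace (ρ z) μ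
  apply_mem_toSubmodule g v hv := by
    rw [Module.End.mem_eigenspace_iff] at hv ⊢
    rw [← Module.End.mul_apply, ← map_mul, ← Subgroup.mem_center_iff.1 hz g, map_mul,
      Module.End.mul_apply, hv, map_smul]

theorem IsIrreducibleRep.exists_eq_smul_one [FiniteDimensional ℂ V] (hρ : IsIrreducibleRep ρ)
    {z : G} (hz : z ∈ Subgroup.center G) : ∃ μ : ℂ, ρ z = μ • 1 := by
  have := hρ.1
  obtain ⟨μ, hμ⟩ := Module.End.exists_eigenvalue (ρ z)
  have htop := (hρ.eq_bot_or_eq_top (centralEigenspace ρ hz μ)).resolve_left hμ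
  refine ⟨μ, LinearMap.ext fun v ↦ ?_⟩
  exact Module.End.mem_eigenspace_iff.1 (htop.ge (Submodule.mem_top (x := v)))

end Representation

section SmallSpectrum

open SL2

variable {W : Type} [AddCommGroup W] [Module ℂ W]

/-- A nontrivial irreducible representation of `SL(2, ℤ/nℤ)` for which the eigenvalues of `t`
lie in `{1, z, z⁻¹}`. -/
structure IsSmallRep {n : ℕ} (ρ : Representation ℂ (SL2 n) W) (z : ℂ) : Prop where
  irreducible : IsIrreducibleRep ρ
  nontrivial : IsNontrivialRep ρ
  spectrum_subset : spectrum ℂ (ρ (tGen n)) ⊆ {1, z, z⁻¹}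

theorem IsSmallRep.of_repIso {V : Type} [AddCommGroup V] [Module ℂ V] {n : ℕ}
    {ρ : Representation ℂ (SL2 n) W} {σ : Representation ℂ (SL2 n) V} {z : ℂ}
    (hρ : IsSmallRep ρ z) (h : RepIso ρ σ) : IsSmallRep σ z :=
  ⟨h.isIrreducibleRep hρ.irreducible, h.isNontrivialRep hρ.nontrivial,
    h.spectrum_eq (tGen n) ▸ hρ.spectrum_subset⟩

theorem iSup_eigenspace_tGen_eq_top [FiniteDimensional ℂ W] {n : ℕ} [NeZero n]
    (ρ : Representation ℂ (SL2 n) W) : ⨆ μ, Module.End.eigenspace (ρ (tGen n)) μ = ⊤ :=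
  iSup_eigenspace_eq_top_of_pow_eq_one (Nat.cast_ne_zero.2 (NeZero.ne n))
    (by rw [← map_pow, tGen_pow_self, map_one])

theorem inv_mem_spectrum_of_isConj [FiniteDimensional ℂ W] {G : Type} [Group G]
    {ρ : Representation ℂ G W} {g : G} (hg : IsConj g g⁻¹) {μ : ℂ}
    (hμ : μ ∈ spectrum ℂ (ρ g)) : μ⁻¹ ∈ spectrum ℂ (ρ g) := by
  obtain ⟨h, hh⟩ := isConj_iff.1 hg
  obtain ⟨v, hv⟩ := (Module.End.hasEigenvalue_iff_mem_spectrum.2 hμ).exists_hasEigenvector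
  have hhv : ρ h v ≠ 0 := by simpa using (ρ.apply_bijective h).injective.ne hv.2
  have hsmul : μ • ρ g (ρ h v) = ρ h v := by
    rw [← map_smul, ← map_smul, ← hv.apply_eq_smul]
    simp only [← Module.End.mul_apply, ← map_mul]
    rw [show g * (h * g) = h by rw [mul_inv_eq_iff_eq_mul.1 hh, mul_inv_cancel_left]]
  have hμ0 : μ ≠ 0 := by
    rintro rfl
    exact hhv (by rw [← hsmul, zero_smul])
  exact (Module.End.hasEigenvalue_of_hasEigenvector (x := ρ h v)
    ⟨Module.End.mem_eigenspace_iff.2 (by rw [eq_inv_smul_iff₀ hμ0, hsmul]), hhv⟩).mem_spectrum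

theorem exists_mem_spectrum_tGen_ne_one [FiniteDimensional ℂ W] {p : ℕ} [Fact p.Prime]
    {ρ : Representation ℂ (SL2 p) W} (hρ : IsNontrivialRep ρ) :
    ∃ μ ∈ spectrum ℂ (ρ (tGen p)), μ ≠ 1 := by
  by_contra! h
  have htop : Module.End.eigenspace (ρ (tGen p)) 1 = ⊤ := by
    simpa using codisjoint_iff.1 (isCompl_eigenspace_of_spectrum_subset
      (iSup_eigenspace_tGen_eq_top ρ) (Set.notMem_empty 1) (by simpa using h)).codisjoint
  have hT : ρ (tGen p) = 1 := LinearMap.ext fun v ↦ by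
    simpa using Module.End.mem_eigenspace_iff.1 (htop.ge (Submodule.mem_top (x := v)))
  obtain ⟨g, hg⟩ := hρ
  exact hg (by rw [eq_one_of_map_tGen_eq_one hT]; rfl)

theorem sub_one_le_ncard_of_pow_mem {z : ℂ} {n : ℕ} (hz : IsPrimitiveRoot z n) {s : Set ℂ}
    (hs : s.Finite) (h : ∀ k, 0 < k → k < n → z ^ k ∈ s) : n - 1 ≤ s.ncard := by
  have hinj : Set.InjOn (z ^ ·) (Finset.Ioo 0 n : Set ℕ) := fun k hk l hl ↦
    hz.pow_inj (Finset.mem_Ioo.1 hk).2 (Finset.mem_Ioo.1 hl).2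
  have hsub : ((Finset.Ioo 0 n).image (z ^ ·) : Set ℂ) ⊆ s := by
    rw [Finset.coe_image, Set.image_subset_iff]
    exact fun k hk ↦ h k (Finset.mem_Ioo.1 hk).1 (Finset.mem_Ioo.1 hk).2
  calc n - 1 = ((Finset.Ioo 0 n).image (z ^ ·)).card := by
        rw [Finset.card_image_of_injOn hinj, Nat.card_Ioo, Nat.sub_zero]
    _ ≤ s.ncard := by
        rw [← Set.ncard_coe_finset]
        exact Set.ncard_le_ncard hsub hs

instance fact_prime_five : Fact (Nat.Prime 5) := ⟨Nat.prime_five⟩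

theorem isSmallRep_of_ncard_spectrum_le_three [FiniteDimensional ℂ W]
    {ρ : Representation ℂ (SL2 5) W} {z : ℂ} (hz : IsPrimitiveRoot z 5)
    (hirr : IsIrreducibleRep ρ) (hnt : IsNontrivialRep ρ)
    (hcard : (spectrum ℂ (ρ (tGen 5))).ncard ≤ 3) : IsSmallRep ρ z ∨ IsSmallRep ρ (z ^ 2) := by
  have hpow {μ : ℂ} (hμ : μ ∈ spectrum ℂ (ρ (tGen 5))) : ∃ k < 5, z ^ k = μ := by
    have := hirr.1
    refine hz.eq_pow_of_pow_eq_one ?_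
    simpa [← map_pow, tGen_pow_self] using spectrum.pow_mem_pow _ 5 hμ
  have hpow_inv {k l : ℕ} (hkl : l + k = 5) : z ^ l = (z ^ k)⁻¹ :=
    eq_inv_of_mul_eq_one_left (by rw [← pow_add, hkl, hz.pow_eq_one])
  have hinv {k l : ℕ} (hkl : l + k = 5) (h : z ^ k ∈ spectrum ℂ (ρ (tGen 5))) :
      z ^ l ∈ spectrum ℂ (ρ (tGen 5)) :=
    hpow_inv hkl ▸ inv_mem_spectrum_of_isConj isConj_tGen_five_inv h
  have hz4 : z ^ 4 = z⁻¹ := by simpa using hpow_inv (k := 1) (l := 4) rfl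
  have hz3 : z ^ 3 = (z ^ 2)⁻¹ := hpow_inv rfl
  by_cases h1 : z ∈ spectrum ℂ (ρ (tGen 5))
  · by_cases h2 : z ^ 2 ∈ spectrum ℂ (ρ (tGen 5))
    · have h4 := sub_one_le_ncard_of_pow_mem hz (Module.End.finite_spectrum _)
        fun k hk0 hk5 ↦ show z ^ k ∈ spectrum ℂ (ρ (tGen 5)) by
          interval_cases k
          exacts [by simpa using h1, h2, hinv rfl h2, hinv (k := 1) rfl (by simpa using h1)]
      omega
    · refine .inl ⟨hirr, hnt, fun μ hμ ↦ ?_⟩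
      obtain ⟨k, hk, rfl⟩ := hpow hμ
      have h3 := mt (hinv (k := 3) rfl) h2
      interval_cases k <;> simp_all
  · refine .inr ⟨hirr, hnt, fun μ hμ ↦ ?_⟩
    obtain ⟨k, hk, rfl⟩ := hpow hμ
    have h4 := mt (hinv (k := 4) (l := 1) rfl) (by simpa using h1)
    interval_cases k <;> simp_all

theorem IsSmallRep.mem_spectrum [FiniteDimensional ℂ W] {ρ : Representation ℂ (SL2 5) W} {z : ℂ}
    (hρ : IsSmallRep ρ z) : z ∈ spectrum ℂ (ρ (tGen 5)) := by
  obtain ⟨μ, hμ, hμ1⟩ := exists_mem_spectrum_tGen_ne_one hρ.nontrivial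
  rcases hρ.spectrum_subset hμ with h | rfl | rfl
  · exact absurd h hμ1
  · exact hμ
  · simpa using inv_mem_spectrum_of_isConj isConj_tGen_five_inv hμ

theorem IsSmallRep.not_repIso [FiniteDimensional ℂ W] {V : Type} [AddCommGroup V] [Module ℂ V]
    {ρ : Representation ℂ (SL2 5) W} {σ : Representation ℂ (SL2 5) V} {z : ℂ}
    (hρ : IsSmallRep ρ z) (hz : IsPrimitiveRoot z 5) (hσ : IsSmallRep σ (z ^ 2)) :
    ¬ RepIso ρ σ := by
  intro h
  have hz0 : z ≠ 0 := hz.ne_zero (by decide)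
  rcases hσ.spectrum_subset (h.spectrum_eq _ ▸ hρ.mem_spectrum) with h1 | h2 | h3
  · exact hz.ne_one (by decide) h1
  · exact hz.ne_one (by decide) ((mul_eq_left₀ hz0).1 (by rw [← sq, ← h2]))
  · refine hz.pow_ne_one_of_pos_of_lt (l := 3) (by decide) (by decide) ?_
    rw [pow_succ', (mul_eq_one_iff_eq_inv₀ (pow_ne_zero 2 hz0)).2 h3]

/-- The matrix of `ρ(s)` in an eigenbasis of `ρ(t)`, for the three-dimensional representations;
`α` is the coefficient of `ρ(s)` at the eigenvalue `z`. -/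
def weylThree (α : ℂ) : Matrix (Fin 3) (Fin 3) ℂ :=
  !![α, -2 * α * (1 + α), (1 + α) ^ 2;
     1, -1 - 2 * α, 1 + α;
     1, -2 * α, α]

/-- The matrix of `ρ(s)` in an eigenbasis of `ρ(t)`, for the two-dimensional representations;
`α` is the coefficient of `ρ(s)` at the eigenvalue `z`. -/
def weylTwo (α : ℂ) : Matrix (Fin 2) (Fin 2) ℂ :=
  !![α, -1 - α ^ 2;
     1, -α]

/-- The local picture behind the classification: `ρ(-1)` is the scalar `ε`, `v ≠ 0` is a
`z`-eigenvector of `T = ρ(t)`, and `ρ(s) v = α v + a + b` with `T a = a` and `T b = z⁻¹ b`. -/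
structure IsWeylTriple {n : ℕ} (ρ : Representation ℂ (SL2 n) W) (z ε α : ℂ) (v a b : W) :
    Prop where
  neg_one : ρ (-1) = ε • 1
  ne_zero : v ≠ 0
  tGen_v : ρ (tGen n) v = z • v
  tGen_a : ρ (tGen n) a = a
  tGen_b : ρ (tGen n) b = z⁻¹ • b
  weyl_v : ρ (weyl (ZMod n)) v = α • v + a + b

namespace IsWeylTriple

variable {n : ℕ} {ρ : Representation ℂ (SL2 n) W} {z ε α : ℂ} {v a b : W}

theorem z_ne_zero (h : IsWeylTriple ρ z ε α v a b) : z ≠ 0 := by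
  rintro rfl
  exact h.ne_zero ((ρ.apply_bijective (tGen n)).injective (by rw [h.tGen_v, zero_smul, map_zero]))

theorem tGen_inv_v (h : IsWeylTriple ρ z ε α v a b) : ρ (tGen n)⁻¹ v = z⁻¹ • v := by
  rw [Representation.inv_apply_eq_iff, map_smul, h.tGen_v, inv_smul_smul₀ h.z_ne_zero]

theorem tGen_inv_a (h : IsWeylTriple ρ z ε α v a b) : ρ (tGen n)⁻¹ a = a := by
  rw [Representation.inv_apply_eq_iff, h.tGen_a]

theorem tGen_inv_b (h : IsWeylTriple ρ z ε α v a b) : ρ (tGen n)⁻¹ b = z • b := by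
  rw [Representation.inv_apply_eq_iff, map_smul, h.tGen_b, smul_inv_smul₀ h.z_ne_zero]

theorem sq_eq_one (h : IsWeylTriple ρ z ε α v a b) : ε * ε = 1 := by
  have hv : (ε * ε) • v = (1 : ℂ) • v := by
    rw [mul_smul, one_smul]
    simpa [h.neg_one] using LinearMap.congr_fun (map_mul ρ (-1) (-1)).symm v
  exact smul_left_injective ℂ h.ne_zero hv

theorem weyl_a_add_weyl_b (h : IsWeylTriple ρ z ε α v a b) :
    ρ (weyl (ZMod n)) a + ρ (weyl (ZMod n)) b = (ε - α ^ 2) • v - α • a - α • b := by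
  have hss := LinearMap.congr_fun (congrArg ρ (weyl_mul_weyl (R := ZMod n))) v
  simp only [map_mul, Module.End.mul_apply, h.neg_one, h.weyl_v, map_add, map_smul,
    LinearMap.smul_apply, Module.End.one_apply] at hss
  linear_combination (norm := module) hss

theorem weyl_a_add_inv_smul_weyl_b (h : IsWeylTriple ρ z ε α v a b) :
    ρ (weyl (ZMod n)) a + z⁻¹ • ρ (weyl (ZMod n)) b =
      (ε * z⁻¹ ^ 2 * α - z * α ^ 2) • v + (ε * z⁻¹ - z * α) • a + (ε - z * α) • b := by
  have hsts := LinearMap.congr_fun (congrArg ρ (weyl_mul_tGen_mul_weyl n)) v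
  rw [← neg_one_mul] at hsts
  simp only [map_mul, Module.End.mul_apply, h.neg_one, h.weyl_v, h.tGen_v, h.tGen_a, h.tGen_b,
    h.tGen_inv_v, h.tGen_inv_a, h.tGen_inv_b, map_add, map_smul,
    LinearMap.smul_apply, Module.End.one_apply] at hsts
  have hz := h.z_ne_zero
  linear_combination (norm := (match_scalars <;> field_simp <;> ring)) hsts

theorem weyl_a_add_smul_weyl_b (h : IsWeylTriple ρ z ε α v a b) :
    ρ (weyl (ZMod n)) a + z • ρ (weyl (ZMod n)) b =
      (z ^ 2 * α - z⁻¹ * α ^ 2) • v + (z - z⁻¹ * α) • a + (1 - z⁻¹ * α) • b := by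
  have hsts := LinearMap.congr_fun (congrArg ρ (weyl_mul_tGen_inv_mul_weyl n)) v
  simp only [map_mul, Module.End.mul_apply, h.weyl_v, h.tGen_v, h.tGen_a, h.tGen_b,
    h.tGen_inv_v, h.tGen_inv_a, h.tGen_inv_b, map_add, map_smul] at hsts
  have hz := h.z_ne_zero
  linear_combination (norm := (match_scalars <;> field_simp <;> ring)) hsts

theorem coeff_eq_zero (h : IsWeylTriple ρ z ε α v a b) (hz : z ^ 2 ≠ 1) {x y w : ℂ}
    (hxyw : x • v + y • a + w • b = 0) : x = 0 ∧ y • a = 0 ∧ w • b = 0 := by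
  have hz0 := h.z_ne_zero
  have hz1 : z ≠ 1 := by rintro rfl; simp at hz
  have hzinv : z ≠ z⁻¹ := by rwa [Ne, ← mul_eq_one_iff_eq_inv₀ hz0, ← sq]
  obtain ⟨hx, hy, hw⟩ := eq_zero_of_eigenvectors_add_eq_zero (f := ρ (tGen n)) (μ₂ := 1) hz1 hzinv
    (by simpa [eq_comm] using hz1) (by rw [map_smul, h.tGen_v, smul_comm])
    (by rw [map_smul, h.tGen_a, one_smul]) (by rw [map_smul, h.tGen_b, smul_comm]) hxyw
  exact ⟨(smul_eq_zero.1 hx).resolve_right h.ne_zero, hy, hw⟩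

-- Among the three `weyl_a_add_*` relations, the combination
-- `z * inv_smul_weyl_b + smul_weyl_b - (1 + z) * weyl_b` eliminates `ρ(s) a` and `ρ(s) b`.
theorem coeff_relations (h : IsWeylTriple ρ z ε α v a b) (hz : z ^ 2 ≠ 1) :
    (z - 1) ^ 2 * (z + 1) * α ^ 2 = (z ^ 3 + ε) * α - z * (z + 1) * ε ∧
      (a = 0 ∨ (z - 1) ^ 2 * (z + 1) * α = z * (z + ε)) ∧
      (b = 0 ∨ (z - 1) ^ 2 * (z + 1) * α = z * (ε * z + 1)) := by
  have hz0 := h.z_ne_zero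
  obtain ⟨hv, ha, hb⟩ := h.coeff_eq_zero hz
    (x := (z - 1) ^ 2 * (z + 1) * α ^ 2 - ((z ^ 3 + ε) * α - z * (z + 1) * ε))
    (y := (z - 1) ^ 2 * (z + 1) * α - z * (z + ε))
    (w := (z - 1) ^ 2 * (z + 1) * α - z * (ε * z + 1)) (by
      linear_combination (norm := (match_scalars <;> field_simp <;> ring))
        z ^ 2 • h.weyl_a_add_inv_smul_weyl_b + z • h.weyl_a_add_smul_weyl_b -
          (z * (1 + z)) • h.weyl_a_add_weyl_b)
  simp only [smul_eq_zero, sub_eq_zero] at hv ha hb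
  exact ⟨hv, ha.symm, hb.symm⟩

theorem linearIndependent (h : IsWeylTriple ρ z ε α v a b) (hz : z ^ 2 ≠ 1) (ha : a ≠ 0)
    (hb : b ≠ 0) : LinearIndependent ℂ ![v, a, b] := by
  rw [Fintype.linearIndependent_iff]
  intro c hc
  simpa [Fin.forall_fin_succ, ha, hb] using
    h.coeff_eq_zero hz (by simpa [Fin.sum_univ_three] using hc)

theorem linearIndependent_pair (h : IsWeylTriple ρ z ε α v a b) (hz : z ^ 2 ≠ 1) (hb : b ≠ 0) :
    LinearIndependent ℂ ![v, b] := by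
  rw [LinearIndependent.pair_iff]
  intro x w hxw
  simpa [hb] using h.coeff_eq_zero hz (x := x) (y := 0) (w := w) (by simpa using hxw)

theorem b_ne_zero (h : IsWeylTriple ρ z ε α v a b) (hz : IsPrimitiveRoot z 5) : b ≠ 0 := by
  rintro rfl
  have hz0 := h.z_ne_zero
  have hz2 : z ^ 2 ≠ 1 := hz.pow_ne_one_of_pos_of_lt (by decide) (by decide)
  have hz5 := hz.pow_eq_one
  obtain ⟨h1, -, -⟩ := h.coeff_relations hz2
  obtain ⟨h2, -, -⟩ := h.coeff_eq_zero hz2 (x := ε - α ^ 2 - ε * z⁻¹ ^ 2 * α + z * α ^ 2)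
    (y := -α - ε * z⁻¹ + z * α) (w := 0) (by
      linear_combination (norm := (simp only [map_zero]; module))
        h.weyl_a_add_inv_smul_weyl_b - h.weyl_a_add_weyl_b)
  have h2' : ε * (z ^ 2 - α) + z ^ 2 * (z - 1) * α ^ 2 = 0 := by
    field_simp at h2
    linear_combination h2
  have hα : (1 + ε) * α = ε * z ^ 2 * (z + 1) := by
    linear_combination (z ^ 2 - 1) * h2' - z ^ 2 * h1 - α * hz5
  have hz1 : z + 1 ≠ 0 := fun h0 ↦ hz2 (by linear_combination (z - 1) * h0)
  rcases mul_self_eq_one_iff.1 h.sq_eq_one with rfl | rfl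
  · have hz4 : z ^ 4 ≠ 1 := hz.pow_ne_one_of_pos_of_lt (by decide) (by decide)
    refine mul_ne_zero hz0 (sub_ne_zero.2 hz4) ?_
    linear_combination (z + 1) * (4 * h2' + (2 - z ^ 2 * (z - 1) * (2 * α + z ^ 2 * (z + 1))) * hα
      - z * (z - 1) * (z + 1) ^ 2 * hz5)
  · simp [hz0, hz1] at hα

theorem mul_eq_of_one (h : IsWeylTriple ρ z 1 α v a b) (hz : IsPrimitiveRoot z 5) :
    (z - 1) ^ 2 * α = z := by
  have hz2 : z ^ 2 ≠ 1 := hz.pow_ne_one_of_pos_of_lt (by decide) (by decide)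
  have hz1 : z + 1 ≠ 0 := fun h0 ↦ hz2 (by linear_combination (z - 1) * h0)
  apply mul_left_cancel₀ hz1
  linear_combination (h.coeff_relations hz2).2.2.resolve_left (h.b_ne_zero hz)

theorem mul_eq_of_neg_one (h : IsWeylTriple ρ z (-1) α v a b) (hz : IsPrimitiveRoot z 5) :
    (1 - z ^ 2) * α = z := by
  have hz1 : z - 1 ≠ 0 := sub_ne_zero.2 (hz.ne_one (by decide))
  have hz2 : z ^ 2 ≠ 1 := hz.pow_ne_one_of_pos_of_lt (by decide) (by decide)
  apply mul_left_cancel₀ hz1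
  linear_combination -(h.coeff_relations hz2).2.2.resolve_left (h.b_ne_zero hz)

theorem a_ne_zero_of_one (h : IsWeylTriple ρ z 1 α v a b) (hz : IsPrimitiveRoot z 5) :
    a ≠ 0 := by
  rintro rfl
  have hz0 := h.z_ne_zero
  have hz2 : z ^ 2 ≠ 1 := hz.pow_ne_one_of_pos_of_lt (by decide) (by decide)
  have hα := h.mul_eq_of_one hz
  obtain ⟨-, -, hb⟩ := h.coeff_eq_zero hz2 (x := z⁻¹ * α - z ^ 2 * α ^ 2 - (1 - α ^ 2)) (y := 0)
    (w := z * (1 - z * α) + α) (by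
      linear_combination (norm := (simp only [map_zero]; match_scalars <;> field_simp <;> ring))
        h.weyl_a_add_weyl_b - z • h.weyl_a_add_inv_smul_weyl_b)
  have hb' := (smul_eq_zero.1 hb).resolve_right (h.b_ne_zero hz)
  exact hz0 (by linear_combination -(z + 1) / 2 * hα - (z - 1) / 2 * hb')

theorem a_eq_zero_of_neg_one (h : IsWeylTriple ρ z (-1) α v a b) (hz : IsPrimitiveRoot z 5) :
    a = 0 := by
  have hz2 : z ^ 2 ≠ 1 := hz.pow_ne_one_of_pos_of_lt (by decide) (by decide)
  refine (h.coeff_relations hz2).2.1.resolve_right fun ha ↦ ?_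
  refine mul_ne_zero h.z_ne_zero (sub_ne_zero.2 (hz.ne_one (by decide))) ?_
  linear_combination -((z - 1) * h.mul_eq_of_neg_one hz + ha) / 2

theorem weyl_b_of_one (h : IsWeylTriple ρ z 1 α v a b) (hz : IsPrimitiveRoot z 5) :
    ρ (weyl (ZMod n)) b = (1 + α) ^ 2 • v + (1 + α) • a + α • b := by
  have hz0 := h.z_ne_zero
  have hz1 : z - 1 ≠ 0 := sub_ne_zero.2 (hz.ne_one (by decide))
  obtain rfl : α = z / (z - 1) ^ 2 := by
    rw [eq_div_iff (pow_ne_zero _ hz1), mul_comm, h.mul_eq_of_one hz]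
  refine smul_right_injective W (sub_ne_zero.2 (inv_ne_one.2 (sub_ne_zero.1 hz1)).symm) ?_
  linear_combination (norm := skip) h.weyl_a_add_weyl_b - h.weyl_a_add_inv_smul_weyl_b
  match_scalars <;> field_simp <;> ring

theorem weyl_a_of_one (h : IsWeylTriple ρ z 1 α v a b) (hz : IsPrimitiveRoot z 5) :
    ρ (weyl (ZMod n)) a = (-2 * α * (1 + α)) • v + (-1 - 2 * α) • a + (-2 * α) • b := by
  linear_combination (norm := module) h.weyl_a_add_weyl_b - h.weyl_b_of_one hz

theorem weyl_b_of_neg_one (h : IsWeylTriple ρ z (-1) α v 0 b) :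
    ρ (weyl (ZMod n)) b = (-1 - α ^ 2) • v + (-α) • b := by
  linear_combination (norm := (simp only [map_zero]; module)) h.weyl_a_add_weyl_b

end IsWeylTriple

theorem exists_isWeylTriple [FiniteDimensional ℂ W] {n : ℕ} [NeZero n]
    {ρ : Representation ℂ (SL2 n) W} {z ε : ℂ} (hz : z ^ 2 ≠ 1) (hε : ρ (-1) = ε • 1)
    (hspec : spectrum ℂ (ρ (tGen n)) ⊆ {1, z, z⁻¹}) (hzspec : z ∈ spectrum ℂ (ρ (tGen n))) :
    ∃ α v a b, IsWeylTriple ρ z ε α v a b := by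
  have hz0 : z ≠ 0 := by
    rintro rfl
    exact spectrum.zero_mem_iff ℂ |>.1 hzspec ((Group.isUnit (tGen n)).map ρ)
  have hzmem : z ∉ ({1, z⁻¹} : Set ℂ) := by
    rintro (h | h)
    · exact hz (by rw [h, one_pow])
    · exact hz (by rwa [sq, mul_eq_one_iff_eq_inv₀ hz0])
  have hcompl := isCompl_eigenspace_of_spectrum_subset (iSup_eigenspace_tGen_eq_top ρ) hzmem
    (by rwa [Set.insert_comm])
  obtain ⟨v, hv, hv0, α, hα⟩ := exists_apply_sub_smul_mem hcompl
    (Module.End.hasEigenvalue_iff_mem_spectrum.2 hzspec) (ρ (weyl (ZMod n)))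
  rw [iSup_pair, Submodule.mem_sup] at hα
  obtain ⟨a, ha, b, hb, hab⟩ := hα
  rw [Module.End.mem_eigenspace_iff] at hv ha hb
  exact ⟨α, v, a, b, hε, hv0, hv, by simpa using ha, hb, by
    rw [add_assoc, hab, add_sub_cancel]⟩

theorem IsSmallRep.exists_basis_of_one [FiniteDimensional ℂ W] {ρ : Representation ℂ (SL2 5) W}
    {z : ℂ} (hρ : IsSmallRep ρ z) (hz : IsPrimitiveRoot z 5) (hε : ρ (-1) = 1) :
    ∃ b : Module.Basis (Fin 3) ℂ W,
      LinearMap.toMatrix b b (ρ (weyl (ZMod 5))) = weylThree (z / (z - 1) ^ 2) ∧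
      LinearMap.toMatrix b b (ρ (tGen 5)) = diagonal ![z, 1, z⁻¹] := by
  have hz2 : z ^ 2 ≠ 1 := hz.pow_ne_one_of_pos_of_lt (by decide) (by decide)
  have hz1 : z - 1 ≠ 0 := sub_ne_zero.2 (hz.ne_one (by decide))
  obtain ⟨α, v, a, b, h⟩ := exists_isWeylTriple hz2 (hε.trans (one_smul ℂ _).symm)
    hρ.spectrum_subset hρ.mem_spectrum
  obtain rfl : α = z / (z - 1) ^ 2 := by
    rw [eq_div_iff (pow_ne_zero _ hz1), mul_comm, h.mul_eq_of_one hz]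
  refine hρ.irreducible.exists_basis_toMatrix_eq (closure_weyl_tGen 5)
    (h.linearIndependent hz2 (h.a_ne_zero_of_one hz) (h.b_ne_zero hz)) ?_ ?_
  · simp [Fin.forall_fin_succ, Fin.sum_univ_three, h.weyl_v, h.weyl_a_of_one hz,
      h.weyl_b_of_one hz, weylThree]
  · simp [Fin.forall_fin_succ, Fin.sum_univ_three, h.tGen_v, h.tGen_a, h.tGen_b]

theorem IsSmallRep.exists_basis_of_neg_one [FiniteDimensional ℂ W]
    {ρ : Representation ℂ (SL2 5) W} {z : ℂ} (hρ : IsSmallRep ρ z) (hz : IsPrimitiveRoot z 5)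
    (hε : ρ (-1) = -1) :
    ∃ b : Module.Basis (Fin 2) ℂ W,
      LinearMap.toMatrix b b (ρ (weyl (ZMod 5))) = weylTwo (z / (1 - z ^ 2)) ∧
      LinearMap.toMatrix b b (ρ (tGen 5)) = diagonal ![z, z⁻¹] := by
  have hz2 : z ^ 2 ≠ 1 := hz.pow_ne_one_of_pos_of_lt (by decide) (by decide)
  obtain ⟨α, v, a, b, h⟩ := exists_isWeylTriple (ε := -1) hz2 (by rw [hε, neg_one_smul])
    hρ.spectrum_subset hρ.mem_spectrum
  obtain rfl : α = z / (1 - z ^ 2) := by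
    rw [eq_div_iff (sub_ne_zero.2 hz2.symm), mul_comm, h.mul_eq_of_neg_one hz]
  obtain rfl := h.a_eq_zero_of_neg_one hz
  refine hρ.irreducible.exists_basis_toMatrix_eq (closure_weyl_tGen 5)
    (h.linearIndependent_pair hz2 (h.b_ne_zero hz)) ?_ ?_
  · simp [Fin.forall_fin_succ, h.weyl_v, h.weyl_b_of_neg_one, weylTwo]
  · simp [Fin.forall_fin_succ, h.tGen_v, h.tGen_b]

theorem spectrum_eq_range_of_toMatrix_eq_diagonal {ι : Type*} [Fintype ι] [DecidableEq ι]
    (b : Module.Basis ι ℂ W) {f : Module.End ℂ W} {d : ι → ℂ}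
    (h : LinearMap.toMatrix b b f = diagonal d) : spectrum ℂ f = Set.range d := by
  rw [← LinearMap.spectrum_toMatrix f b, h, _root_.spectrum_diagonal]

end SmallSpectrum

section Weil

variable {F : Type*} [Field F] [Fintype F] [DecidableEq F]

variable (F) in
/-- The quadratic character of the finite field `F`, with values in `ℂ`. -/
def complexQuadraticChar : MulChar F ℂ :=
  (quadraticChar F).ringHomComp (Int.castRingHom ℂ)

local notation "χ" => complexQuadraticChar F

theorem complexQuadraticChar_isQuadratic : (χ).IsQuadratic :=
  (quadraticChar_isQuadratic F).comp _

theorem complexQuadraticChar_mul_self {a : F} (ha : a ≠ 0) : χ a * χ a = 1 := by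
  rw [← map_mul, ← sq, complexQuadraticChar, MulChar.ringHomComp_apply,
    quadraticChar_sq_one' ha, map_one]

theorem complexQuadraticChar_inv (a : F) : χ a⁻¹ = χ a := by
  rw [← MulChar.inv_apply', complexQuadraticChar_isQuadratic.inv]

variable {ψ : AddChar F ℂ}

theorem gaussSum_complexQuadraticChar_sq (hF : ringChar F ≠ 2) (hψ : ψ.IsPrimitive) :
    gaussSum χ ψ ^ 2 = χ (-1) * Fintype.card F :=
  gaussSum_sq ((MulChar.ringHomComp_ne_one_iff Int.cast_injective).2 (quadraticChar_ne_one hF))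
    complexQuadraticChar_isQuadratic hψ

theorem gaussSum_complexQuadraticChar_ne_zero (hF : ringChar F ≠ 2) (hψ : ψ.IsPrimitive) :
    gaussSum χ ψ ≠ 0 := by
  have hsq : gaussSum χ ψ ^ 2 ≠ 0 := by
    rw [gaussSum_complexQuadraticChar_sq hF hψ]
    exact mul_ne_zero (left_ne_zero_of_mul_eq_one
      (complexQuadraticChar_mul_self (neg_ne_zero.2 one_ne_zero))) (by simp)
  exact pow_ne_zero_iff two_ne_zero |>.1 hsq

theorem sum_addChar_mul_sq (hF : ringChar F ≠ 2) (hψ : ψ.IsPrimitive) {a : F} (ha : a ≠ 0) :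
    ∑ x, ψ (a * x ^ 2) = χ a * gaussSum χ ψ := by
  have hcard (y : F) : ((Finset.univ.filter fun x : F ↦ x ^ 2 = y).card : ℂ) = χ y + 1 := by
    have := quadraticChar_card_sqrts hF y
    rw [complexQuadraticChar, MulChar.ringHomComp_apply, eq_intCast, ← Int.cast_one,
      ← Int.cast_add, ← this, Int.cast_natCast]
    congr 2
    ext
    simp
  have hshift : gaussSum χ (ψ.mulShift a) = χ a * gaussSum χ ψ := by
    rw [← gaussSum_mulShift χ ψ (Units.mk0 a ha), Units.val_mk0, ← mul_assoc,
      complexQuadraticChar_mul_self ha, one_mul]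
  calc ∑ x, ψ (a * x ^ 2)
      = ∑ y, ∑ x with x ^ 2 = y, ψ (a * x ^ 2) := (Finset.sum_fiberwise _ _ _).symm
    _ = ∑ y, (χ y + 1) * ψ.mulShift a y := by
        refine Finset.sum_congr rfl fun y _ ↦ ?_
        rw [← hcard, ← nsmul_eq_mul, ← Finset.sum_const]
        refine Finset.sum_congr rfl fun x hx ↦ ?_
        rw [(Finset.mem_filter.1 hx).2, AddChar.mulShift_apply]
    _ = gaussSum χ (ψ.mulShift a) := by
        simp only [add_mul, one_mul, Finset.sum_add_distrib,
          AddChar.sum_eq_zero_of_ne_one (hψ ha), add_zero, gaussSum]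
    _ = χ a * gaussSum χ ψ := hshift

theorem sum_addChar_quadratic (hF : ringChar F ≠ 2) (hψ : ψ.IsPrimitive) {a : F} (ha : a ≠ 0)
    (b : F) : ∑ x, ψ (a * x ^ 2 + 2 * b * x) = χ a * gaussSum χ ψ * ψ (-(b ^ 2 / a)) := by
  rw [← sum_addChar_mul_sq hF hψ ha,
    ← Equiv.sum_comp (Equiv.addRight (b / a)) fun x ↦ ψ (a * x ^ 2), Finset.sum_mul]
  refine Finset.sum_congr rfl fun x _ ↦ ?_
  rw [← AddChar.map_add_eq_mul, Equiv.coe_addRight]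
  congr 1
  field_simp
  ring

variable (ψ) in
/-- The matrix of `g ∈ SL(2, F)` in the Weil representation attached to `ψ`, acting on functions
on `F`. For `g = [[a, b], [c, d]]` the operator is `f ↦ χ(a) ψ(a b x²) f(a x)` if `c = 0`, and
otherwise the integral operator with kernel `χ(c) G⁻¹ ψ((a x² - 2 x y + d y²) / c)`, where `G` is
the Gauss sum of `χ` and `ψ`. -/
noncomputable def weilKernel (g : SL(2, F)) : Matrix F F ℂ :=
  of fun x y ↦
    if g 1 0 = 0 then if y = g 0 0 * x then χ (g 0 0) * ψ (g 0 0 * g 0 1 * x ^ 2) else 0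
    else χ (g 1 0) / gaussSum χ ψ *
      ψ ((g 0 0 * x ^ 2 - 2 * x * y + g 1 1 * y ^ 2) / g 1 0)

theorem weilKernel_upper (b : F) :
    weilKernel ψ (SL2.upper b) = diagonal fun x ↦ ψ (b * x ^ 2) := by
  ext x y
  simp [weilKernel, SL2.upper, diagonal_apply, eq_comm]

theorem weilKernel_weyl (x y : F) :
    weilKernel ψ (SL2.weyl F) x y = χ (-1) / gaussSum χ ψ * ψ (2 * x * y) := by
  simp [weilKernel, SL2.weyl]

theorem weilKernel_mul_upper (g : SL(2, F)) (b : F) :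
    weilKernel ψ (g * SL2.upper b) = weilKernel ψ g * weilKernel ψ (SL2.upper b) := by
  ext x y
  rw [weilKernel_upper, mul_diagonal]
  simp only [weilKernel, SL2.coe_mul_upper, of_apply, cons_val', cons_val_zero, cons_val_one]
  generalize g 0 0 = a, g 0 1 = b', g 1 0 = c, g 1 1 = d
  split_ifs with hc hy
  · rw [mul_assoc (χ a), ← AddChar.map_add_eq_mul, hy]
    congr 2
    ring
  · rw [zero_mul]
  · rw [mul_assoc (χ c / _), ← AddChar.map_add_eq_mul]
    congr 2
    field

theorem sum_gaussian_mul_fourier (hF : ringChar F ≠ 2) (hψ : ψ.IsPrimitive) {a b c d : F}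
    (hdet : a * d - b * c = 1) (hc : c ≠ 0) (hd : d ≠ 0) (x y : F) :
    ∑ u, χ c / gaussSum χ ψ * ψ ((a * x ^ 2 - 2 * x * u + d * u ^ 2) / c) *
      (χ (-1) / gaussSum χ ψ * ψ (2 * u * y)) =
    χ (-d) / gaussSum χ ψ * ψ ((-b * x ^ 2 - 2 * x * y + c * y ^ 2) / -d) := by
  have hG := gaussSum_complexQuadraticChar_ne_zero hF hψ
  have hχ : χ (d / c) * χ c = χ d := by rw [← map_mul, div_mul_cancel₀ d hc]
  have hχ' : χ (-d) = χ (-1) * χ d := by rw [← map_mul, neg_one_mul]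
  have hexp : (-b * x ^ 2 - 2 * x * y + c * y ^ 2) / -d =
      a * x ^ 2 / c + -((y - x / c) ^ 2 / (d / c)) := by
    field_simp
    linear_combination (-x ^ 2) * hdet
  calc _ = ∑ u, χ c * χ (-1) / gaussSum χ ψ ^ 2 * ψ (a * x ^ 2 / c) *
        ψ (d / c * u ^ 2 + 2 * (y - x / c) * u) := by
        refine Finset.sum_congr rfl fun u _ ↦ ?_
        rw [mul_mul_mul_comm, div_mul_div_comm, ← sq, mul_assoc (χ c * χ (-1) / _),
          ← AddChar.map_add_eq_mul, ← AddChar.map_add_eq_mul]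
        congr 2
        field
    _ = _ := by
        rw [← Finset.mul_sum, sum_addChar_quadratic hF hψ (div_ne_zero hd hc), hexp,
          AddChar.map_add_eq_mul, hχ', ← hχ]
        field

theorem sum_chirp_mul_fourier (hF : ringChar F ≠ 2) (hψ : ψ.IsPrimitive) {a b c : F}
    (hbc : -b * c = 1) (x y : F) :
    ∑ u, χ c / gaussSum χ ψ * ψ ((a * x ^ 2 - 2 * x * u) / c) *
      (χ (-1) / gaussSum χ ψ * ψ (2 * u * y)) =
    if y = -b * x then χ (-b) * ψ (-b * a * x ^ 2) else 0 := by
  have hb : -b = c⁻¹ := eq_inv_of_mul_eq_one_left hbc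
  have hc : c ≠ 0 := right_ne_zero_of_mul_eq_one hbc
  have hy : 2 * (y - c⁻¹ * x) = 0 ↔ y = c⁻¹ * x := by
    rw [mul_eq_zero, sub_eq_zero, or_iff_right (Ring.two_ne_zero hF)]
  have hconst : χ c * χ (-1) / gaussSum χ ψ ^ 2 * Fintype.card F = χ c := by
    have := gaussSum_complexQuadraticChar_sq hF hψ
    have hG := gaussSum_complexQuadraticChar_ne_zero hF hψ
    rw [div_mul_eq_mul_div, mul_assoc, ← this, mul_div_cancel_right₀ _ (pow_ne_zero 2 hG)]
  calc _ = ∑ u, χ c * χ (-1) / gaussSum χ ψ ^ 2 * ψ (c⁻¹ * a * x ^ 2) *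
        ψ (u * (2 * (y - c⁻¹ * x))) := by
        refine Finset.sum_congr rfl fun u _ ↦ ?_
        rw [mul_mul_mul_comm, div_mul_div_comm, ← sq, mul_assoc (χ c * χ (-1) / _),
          ← AddChar.map_add_eq_mul, ← AddChar.map_add_eq_mul]
        congr 2
        field
    _ = _ := by
        rw [← Finset.mul_sum, AddChar.sum_mulShift _ hψ, hb, complexQuadraticChar_inv]
        simp only [hy, Nat.cast_ite, Nat.cast_zero, mul_ite, mul_zero]
        rw [mul_right_comm, hconst]

theorem weilKernel_mul_weyl (hF : ringChar F ≠ 2) (hψ : ψ.IsPrimitive) (g : SL(2, F)) :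
    weilKernel ψ (g * SL2.weyl F) = weilKernel ψ g * weilKernel ψ (SL2.weyl F) := by
  have hdet : g 0 0 * g 1 1 - g 0 1 * g 1 0 = 1 := by rw [← det_fin_two, g.det_coe]
  ext x y
  rw [mul_apply]
  simp only [weilKernel_weyl]
  simp only [weilKernel, SL2.coe_mul_weyl, of_apply, cons_val', cons_val_zero, cons_val_one]
  generalize g 0 0 = a, g 0 1 = b, g 1 0 = c, g 1 1 = d at *
  by_cases hc : c = 0
  · subst hc
    have had : a * d = 1 := by simpa using hdet
    have hd : d ≠ 0 := right_ne_zero_of_mul_eq_one had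
    have hχ : χ (-d) = χ a * χ (-1) := by
      rw [eq_inv_of_mul_eq_one_left had, complexQuadraticChar_inv, ← map_mul, mul_neg_one]
    simp only [neg_eq_zero, hd, if_true, if_false, ite_mul, zero_mul, Finset.sum_ite_eq',
      Finset.mem_univ, hχ]
    rw [mul_mul_mul_comm, ← AddChar.map_add_eq_mul, mul_div_assoc]
    congr 2
    field_simp
    linear_combination (-2 * x * y - b * x ^ 2) * had
  simp only [hc, if_false, neg_eq_zero]
  by_cases hd : d = 0
  · subst hd
    simpa using (sum_chirp_mul_fourier hF hψ (by simpa using hdet) x y).symm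
  · simpa [hd] using (sum_gaussian_mul_fourier hF hψ hdet hc hd x y).symm

/-- The Weil representation of `SL(2, F)` on the functions on `F`, where `F` is a finite field of
odd characteristic and `ψ` is a primitive additive character of `F`. -/
noncomputable def weilRep (hF : ringChar F ≠ 2) (hψ : ψ.IsPrimitive) :
    Representation ℂ SL(2, F) (F → ℂ) :=
  ((toLinAlgEquiv' : Matrix F F ℂ ≃ₐ[ℂ] _) : Matrix F F ℂ →* Module.End ℂ (F → ℂ)).comp <|
    MonoidHom.ofClosureMEqTopRight (weilKernel ψ) SL2.closure_weyl_upper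
      (by rw [← SL2.upper_zero, weilKernel_upper]; simp)
      (by
        rintro g _ (rfl | ⟨b, rfl⟩)
        exacts [weilKernel_mul_weyl hF hψ g, weilKernel_mul_upper g b])

variable (hF : ringChar F ≠ 2) (hψ : ψ.IsPrimitive)

theorem weilRep_apply (g : SL(2, F)) : weilRep hF hψ g = toLin' (weilKernel ψ g) := rfl

theorem weilRep_upper (b : F) :
    weilRep hF hψ (SL2.upper b) = toLin' (diagonal fun x ↦ ψ (b * x ^ 2)) := by
  rw [weilRep_apply, weilKernel_upper]

theorem weilRep_weyl_apply (f : F → ℂ) (x : F) :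
    weilRep hF hψ (SL2.weyl F) f x =
      χ (-1) / gaussSum χ ψ * ∑ y, ψ (2 * x * y) * f y := by
  simp [weilRep_apply, mulVec, dotProduct, weilKernel_weyl, Finset.mul_sum, mul_assoc]

theorem weilRep_neg_one_apply (f : F → ℂ) (x : F) :
    weilRep hF hψ (-1) f x = χ (-1) * f (-x) := by
  simp [weilRep_apply, mulVec, dotProduct, weilKernel]

theorem hasEigenvalue_weilRep_neg_one {ε : ℂ} (hε : ε * ε = 1) :
    Module.End.HasEigenvalue (weilRep hF hψ (-1)) (χ (-1) * ε) := by
  have hne : (1 : F) ≠ -1 := (Ring.neg_one_ne_one_of_char_ne_two hF).symm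
  refine Module.End.hasEigenvalue_of_hasEigenvector (x := Pi.single 1 1 + ε • Pi.single (-1) 1)
    ⟨Module.End.mem_eigenspace_iff.2 (funext fun x ↦ ?_), fun h ↦ ?_⟩
  · rw [weilRep_neg_one_apply]
    have hneg : -x = 1 ↔ x = -1 := neg_eq_iff_eq_neg
    simp only [Pi.add_apply, Pi.smul_apply, Pi.single_apply, smul_eq_mul, neg_inj, hneg]
    linear_combination (-χ (-1) * if x = -1 then 1 else 0) * hε
  · simpa [hne] using congrFun h 1

theorem eq_zero_of_forall_weilRep_eq {f : F → ℂ} (hf : ∀ g, weilRep hF hψ g f = f) : f = 0 := by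
  have hsupp {x : F} (hx : x ≠ 0) : f x = 0 := by
    obtain ⟨y, hy⟩ := AddChar.ne_one_iff.1 (hψ (pow_ne_zero 2 hx))
    have := congrFun (hf (SL2.upper y)) x
    rw [weilRep_upper, toLin'_apply, mulVec_diagonal] at this
    by_contra h0
    exact hy (by simpa [AddChar.mulShift_apply, mul_comm, h0] using this)
  have hconst (x : F) : f x = χ (-1) / gaussSum χ ψ * f 0 := by
    rw [← congrFun (hf (SL2.weyl F)) x, weilRep_weyl_apply, Finset.sum_eq_single 0]
    · simp
    · exact fun y _ hy ↦ by rw [hsupp hy, mul_zero]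
    · simp
  funext x
  by_cases hx : x = 0
  · have h1 := (hconst 1).symm.trans (hsupp one_ne_zero)
    rw [hx, hconst 0, h1, Pi.zero_apply]
  · exact hsupp hx

end Weil

theorem ringChar_zmod_five_ne_two : ringChar (ZMod 5) ≠ 2 := by
  rw [ZMod.ringChar_zmod_n]
  decide

theorem complexQuadraticChar_neg_one_zmod_five : complexQuadraticChar (ZMod 5) (-1) = 1 := by
  rw [complexQuadraticChar, MulChar.ringHomComp_apply,
    (quadraticChar_one_iff_isSquare (neg_ne_zero.2 one_ne_zero)).2 ⟨2, by decide⟩, map_one]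

theorem exists_isSmallRep {z ε : ℂ} (hz : IsPrimitiveRoot z 5) (hε : ε * ε = 1) :
    ∃ (V : Submodule ℂ (ZMod 5 → ℂ)) (σ : Representation ℂ (SL2 5) V),
      IsSmallRep σ z ∧ σ (-1) = ε • 1 := by
  have hψ := AddChar.zmodChar_primitive_of_primitive_root 5 hz
  set ψ := AddChar.zmodChar 5 hz.pow_eq_one
  let ρ := weilRep ringChar_zmod_five_ne_two hψ
  have hbot : centralEigenspace ρ SL2.neg_one_mem_center ε ≠ ⊥ := fun h ↦ by
    have := hasEigenvalue_weilRep_neg_one ringChar_zmod_five_ne_two hψ hε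
    rw [complexQuadraticChar_neg_one_zmod_five, one_mul] at this
    exact this (congrArg Subrepresentation.toSubmodule h)
  obtain ⟨q, hq, hirr⟩ := exists_le_isIrreducibleRep hbot
  refine ⟨q.toSubmodule, q.toRepresentation, ⟨hirr, ?_, ?_⟩, ?_⟩
  · by_contra hnt
    have := hirr.1
    obtain ⟨v, hv⟩ := exists_ne (0 : q.toSubmodule)
    refine hv (Subtype.ext (eq_zero_of_forall_weilRep_eq ringChar_zmod_five_ne_two hψ fun g ↦ ?_))
    have : q.toRepresentation g = LinearMap.id := not_not.1 fun h ↦ hnt ⟨g, h⟩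
    exact congrArg Subtype.val (LinearMap.congr_fun this v)
  · refine (spectrum_toRepresentation_subset q _).trans ?_
    rw [SL2.tGen_eq_upper, weilRep_upper, Matrix.spectrum_toLin', _root_.spectrum_diagonal]
    have hz4 : z ^ 4 = z⁻¹ := eq_inv_of_mul_eq_one_left (by rw [← pow_succ, hz.pow_eq_one])
    rintro _ ⟨x, rfl⟩
    have hx : (x ^ 2).val = 0 ∨ (x ^ 2).val = 1 ∨ (x ^ 2).val = 4 := by
      revert x
      decide
    rcases hx with hx | hx | hx <;> simp [ψ, AddChar.zmodChar_apply, hx, hz4]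
  · refine LinearMap.ext fun v ↦ Subtype.ext ?_
    exact Module.End.mem_eigenspace_iff.1 (hq v.2)

/-- `σ` is a small representation for `z` in which `-1` acts by `ε`, and every such
representation is isomorphic to `σ`. -/
structure IsUniqueSmallRep {V : Type} [AddCommGroup V] [Module ℂ V]
    (σ : Representation ℂ (SL2 5) V) (z ε : ℂ) : Prop extends IsSmallRep σ z where
  repIso (W : Type) [AddCommGroup W] [Module ℂ W] [FiniteDimensional ℂ W]
    (ρ : Representation ℂ (SL2 5) W) : IsSmallRep ρ z → ρ (-1) = ε • 1 → RepIso ρ σ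

theorem exists_isUniqueSmallRep {ι : Type} [Fintype ι] [DecidableEq ι] {z ε : ℂ}
    (hz : IsPrimitiveRoot z 5) (hε : ε * ε = 1) {A : Matrix ι ι ℂ} {d : ι → ℂ}
    (h : ∀ (W : Type) [AddCommGroup W] [Module ℂ W] [FiniteDimensional ℂ W]
      (ρ : Representation ℂ (SL2 5) W), IsSmallRep ρ z → ρ (-1) = ε • 1 →
      ∃ b : Module.Basis ι ℂ W, LinearMap.toMatrix b b (ρ (SL2.weyl (ZMod 5))) = A ∧
        LinearMap.toMatrix b b (ρ (tGen 5)) = diagonal d) :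
    ∃ σ : Representation ℂ (SL2 5) (ι → ℂ), IsUniqueSmallRep σ z ε ∧
      spectrum ℂ (σ (tGen 5)) = Set.range d := by
  obtain ⟨V, τ, hτ, hτε⟩ := exists_isSmallRep hz hε
  obtain ⟨c, hcs, hct⟩ := h V τ hτ hτε
  have hiso := repIso_transport τ c.equivFun
  refine ⟨transport τ c.equivFun, ⟨hτ.of_repIso hiso, fun W _ _ _ ρ hρ hρε ↦ ?_⟩, ?_⟩
  · obtain ⟨b, hbs, hbt⟩ := h W ρ hρ hρε
    refine (RepIso.of_toMatrix_eq (SL2.closure_weyl_tGen 5) b c ?_).trans hiso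
    rintro _ (rfl | rfl)
    exacts [hbs.trans hcs.symm, hbt.trans hct.symm]
  · rw [← hiso.spectrum_eq, spectrum_eq_range_of_toMatrix_eq_diagonal c hct]

theorem exists_isUniqueSmallRep_fin_two {z : ℂ} (hz : IsPrimitiveRoot z 5) :
    ∃ σ : Representation ℂ (SL2 5) (Fin 2 → ℂ), IsUniqueSmallRep σ z (-1) ∧
      spectrum ℂ (σ (tGen 5)) = {z, z⁻¹} := by
  have hrange : Set.range ![z, z⁻¹] = {z, z⁻¹} := by
    simp only [range_cons, range_empty, Set.union_empty, Set.singleton_union]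
  rw [← hrange]
  exact exists_isUniqueSmallRep hz (by norm_num) fun W _ _ _ ρ hρ hε ↦
    hρ.exists_basis_of_neg_one hz (by simpa using hε)

theorem exists_isUniqueSmallRep_fin_three {z : ℂ} (hz : IsPrimitiveRoot z 5) :
    ∃ σ : Representation ℂ (SL2 5) (Fin 3 → ℂ), IsUniqueSmallRep σ z 1 ∧
      spectrum ℂ (σ (tGen 5)) = {1, z, z⁻¹} := by
  have hrange : Set.range ![z, 1, z⁻¹] = {1, z, z⁻¹} := by
    simp only [range_cons, range_empty, Set.union_empty, Set.singleton_union, Set.insert_comm]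
  rw [← hrange]
  exact exists_isUniqueSmallRep hz (by norm_num) fun W _ _ _ ρ hρ hε ↦
    hρ.exists_basis_of_one hz (by simpa using hε)

theorem IsIrreducibleRep.map_neg_one_eq {n : ℕ} {W : Type} [AddCommGroup W] [Module ℂ W]
    [FiniteDimensional ℂ W] {ρ : Representation ℂ (SL2 n) W} (hρ : IsIrreducibleRep ρ) :
    ρ (-1) = (-1 : ℂ) • 1 ∨ ρ (-1) = (1 : ℂ) • 1 := by
  have := hρ.1
  obtain ⟨μ, hμ⟩ := hρ.exists_eq_smul_one SL2.neg_one_mem_center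
  have hsq : (μ * μ) • (1 : Module.End ℂ W) = (1 : ℂ) • 1 := by
    calc (μ * μ) • (1 : Module.End ℂ W) = ρ (-1) * ρ (-1) := by simp [hμ, smul_smul]
      _ = (1 : ℂ) • 1 := by rw [← map_mul, neg_mul_neg, mul_one, map_one, one_smul]
  rw [hμ]
  rcases mul_self_eq_one_iff.1 (smul_left_injective ℂ one_ne_zero hsq) with rfl | rfl
  exacts [.inr rfl, .inl rfl]

theorem isPrimitiveRoot_ζ_five : IsPrimitiveRoot (ζ 5) 5 :=
  Complex.isPrimitiveRoot_exp 5 (by decide)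

/-- Up to isomorphism, `SL(2, ℤ/5ℤ)` has exactly four nontrivial irreducible
finite-dimensional complex representations `ρ` for which `ρ(t)` has at most three distinct
eigenvalues: two of dimension `2`, with `t`-spectra `{ζ₅, ζ₅⁴}` and `{ζ₅², ζ₅³}`, and two
of dimension `3`, with `t`-spectra `{1, ζ₅, ζ₅⁴}` and `{1, ζ₅², ζ₅³}`. -/
theorem stmt7 :
    ∃ (ρ₁ ρ₂ : Representation ℂ (SL2 5) (Fin 2 → ℂ))
      (ρ₃ ρ₄ : Representation ℂ (SL2 5) (Fin 3 → ℂ)),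
      (IsIrreducibleRep ρ₁ ∧ IsNontrivialRep ρ₁ ∧
        spectrum ℂ (ρ₁ (tGen 5)) = {ζ 5, ζ 5 ^ 4}) ∧
      (IsIrreducibleRep ρ₂ ∧ IsNontrivialRep ρ₂ ∧
        spectrum ℂ (ρ₂ (tGen 5)) = {ζ 5 ^ 2, ζ 5 ^ 3}) ∧
      (IsIrreducibleRep ρ₃ ∧ IsNontrivialRep ρ₃ ∧
        spectrum ℂ (ρ₃ (tGen 5)) = {1, ζ 5, ζ 5 ^ 4}) ∧
      (IsIrreducibleRep ρ₄ ∧ IsNontrivialRep ρ₄ ∧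
        spectrum ℂ (ρ₄ (tGen 5)) = {1, ζ 5 ^ 2, ζ 5 ^ 3}) ∧
      (¬ RepIso ρ₁ ρ₂ ∧ ¬ RepIso ρ₁ ρ₃ ∧ ¬ RepIso ρ₁ ρ₄ ∧
       ¬ RepIso ρ₂ ρ₃ ∧ ¬ RepIso ρ₂ ρ₄ ∧ ¬ RepIso ρ₃ ρ₄) ∧
      (∀ (W : Type) [AddCommGroup W] [Module ℂ W] [FiniteDimensional ℂ W]
        (ρ : Representation ℂ (SL2 5) W),
        IsIrreducibleRep ρ → IsNontrivialRep ρ →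
        (spectrum ℂ (ρ (tGen 5))).ncard ≤ 3 →
        RepIso ρ ρ₁ ∨ RepIso ρ ρ₂ ∨ RepIso ρ ρ₃ ∨ RepIso ρ ρ₄) := by
  have hz := isPrimitiveRoot_ζ_five
  have hz2 : IsPrimitiveRoot (ζ 5 ^ 2) 5 := hz.pow_of_coprime 2 (by decide)
  have h4 : (ζ 5)⁻¹ = ζ 5 ^ 4 :=
    (eq_inv_of_mul_eq_one_left (by rw [← pow_succ, hz.pow_eq_one])).symm
  have h3 : (ζ 5 ^ 2)⁻¹ = ζ 5 ^ 3 :=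
    (eq_inv_of_mul_eq_one_left (by rw [← pow_add, hz.pow_eq_one])).symm
  obtain ⟨ρ₁, h₁, s₁⟩ := exists_isUniqueSmallRep_fin_two hz
  obtain ⟨ρ₂, h₂, s₂⟩ := exists_isUniqueSmallRep_fin_two hz2
  obtain ⟨ρ₃, h₃, s₃⟩ := exists_isUniqueSmallRep_fin_three hz
  obtain ⟨ρ₄, h₄, s₄⟩ := exists_isUniqueSmallRep_fin_three hz2
  have hdim {σ : Representation ℂ (SL2 5) (Fin 2 → ℂ)} {τ : Representation ℂ (SL2 5) (Fin 3 → ℂ)} :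
      ¬ RepIso σ τ := fun h ↦ by simpa using h.finrank_eq
  rw [h4] at s₁ s₃
  rw [h3] at s₂ s₄
  refine ⟨ρ₁, ρ₂, ρ₃, ρ₄, ⟨h₁.irreducible, h₁.nontrivial, s₁⟩, ⟨h₂.irreducible, h₂.nontrivial, s₂⟩,
    ⟨h₃.irreducible, h₃.nontrivial, s₃⟩, ⟨h₄.irreducible, h₄.nontrivial, s₄⟩,
    ⟨h₁.not_repIso hz h₂.toIsSmallRep, hdim, hdim, hdim, hdim,
      h₃.not_repIso hz h₄.toIsSmallRep⟩, fun W _ _ _ ρ hirr hnt hcard ↦ ?_⟩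
  rcases isSmallRep_of_ncard_spectrum_le_three hz hirr hnt hcard with h | h <;>
    rcases hirr.map_neg_one_eq with hε | hε
  exacts [.inl (h₁.repIso W ρ h hε), .inr (.inr (.inl (h₃.repIso W ρ h hε))),
    .inr (.inl (h₂.repIso W ρ h hε)), .inr (.inr (.inr (h₄.repIso W ρ h hε)))]
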